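/- arXiv:2004.02370 — 2 statements merged into one kernel-verified Lean document; each statement's English description precedes it below -/
import Mathlib

section
/- Let α > 0, let H̄ ∈ ℝ^{M×L̄}, and let S ∈ {0,1}^{N×L̄} be a selection matrix with pairwise distinct rows, so that S Sᵀ = I_N and SᵀS = diag(b) for the 0/1 indicator vector b of selected columns. Set H := H̄ Sᵀ and C := (α⁻¹ H̄ᵀH̄ + I_{L̄})⁻¹. Then the matrix C − diag(b) is invertible if and only if H has full column rank N (equivalently, HᵀH is invertible). -/
/-!
Write `K = α⁻¹ H̄ᵀH̄ + 1`, which is positive definite, so `C = K⁻¹`, and `D = diag b = SᵀS`.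
Then `K (C − D) = 1 − (K Sᵀ) S`, and the Weinstein–Aronszajn identity
`det (1 − A B) = det (1 − B A)` replaces this by the `N × N` determinant of
`1 − S K Sᵀ`. Since `S Sᵀ = 1`, that matrix is `−α⁻¹ HᵀH` with `H = H̄ Sᵀ`. Hence `C − D` is
invertible iff `HᵀH` is, and `HᵀH` has the same rank as `H`.
-/

open Matrix BigOperators
open scoped Classical

/-- A radial grid: a tree on buses `{0,…,N}` with `N` lines, each line `ℓ`
having an ordered pair of endpoints (the first carrying `+1` in the incidence
matrix, the second `−1`). -/
structure RadialGrid (N : ℕ) where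
  ep : Fin N → Fin (N + 1) × Fin (N + 1)
  ne : ∀ ℓ, (ep ℓ).1 ≠ (ep ℓ).2
  inj : Function.Injective fun ℓ => s((ep ℓ).1, (ep ℓ).2)
  tree : (SimpleGraph.fromEdgeSet (Set.range fun ℓ => s((ep ℓ).1, (ep ℓ).2))).IsTree

namespace RadialGrid

variable {N : ℕ}

/-- The underlying tree graph. -/
def graph (T : RadialGrid N) : SimpleGraph (Fin (N + 1)) :=
  SimpleGraph.fromEdgeSet (Set.range fun ℓ => s((T.ep ℓ).1, (T.ep ℓ).2))

/-- A leaf bus: a non-substation bus of tree-degree one. -/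
noncomputable def isLeaf (T : RadialGrid N) (n : Fin (N + 1)) : Prop :=
  n ≠ 0 ∧ (T.graph.neighborSet n).ncard = 1

/-- The feeding path of bus `n`: the unique path from the substation `0` to `n`. -/
noncomputable def fpath (T : RadialGrid N) (n : Fin (N + 1)) : T.graph.Walk 0 n :=
  (T.tree.existsUnique_path 0 n).choose

/-- Line `ℓ` lies on the feeding path of bus `n`. -/
def onPath (T : RadialGrid N) (ℓ : Fin N) (n : Fin (N + 1)) : Prop :=
  s((T.ep ℓ).1, (T.ep ℓ).2) ∈ (T.fpath n).edges

/-- Bus `a` is an ancestor of bus `n`: `a` lies on the feeding path of `n`, `a ≠ n`. -/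
def ancestor (T : RadialGrid N) (a n : Fin (N + 1)) : Prop :=
  a ∈ (T.fpath n).support ∧ a ≠ n

/-- `R_{ab}` for buses `a b`: sum of resistances of lines on the intersection of
the feeding paths of `a` and `b`. -/
noncomputable def Rbus (T : RadialGrid N) (r : Fin N → ℝ) (a b : Fin (N + 1)) : ℝ :=
  ∑ ℓ : Fin N, if T.onPath ℓ a ∧ T.onPath ℓ b then r ℓ else 0

/-- The resistance matrix `R` on the non-substation buses `{1,…,N}`. -/
noncomputable def R (T : RadialGrid N) (r : Fin N → ℝ) (m n : Fin N) : ℝ :=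
  T.Rbus r m.succ n.succ

/-- The reduced incidence matrix `A` (substation column deleted): row `ℓ` has `+1`
at the first endpoint of line `ℓ` and `−1` at the second. -/
def A (T : RadialGrid N) : Matrix (Fin N) (Fin N) ℝ := fun ℓ i =>
  if i.succ = (T.ep ℓ).1 then 1 else if i.succ = (T.ep ℓ).2 then -1 else 0

/-- `G := Aᵀ diag(g) A` for a conductance vector `g`. -/
noncomputable def Gmat (T : RadialGrid N) (g : Fin N → ℝ) : Matrix (Fin N) (Fin N) ℝ :=
  T.Aᵀ * Matrix.diagonal g * T.A

end RadialGrid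

/-- `I_C`: the `N × |C|` matrix collecting the columns of the identity indexed by `C`. -/
def IC {N : ℕ} (C : Finset (Fin N)) : Matrix (Fin N) ↥C ℝ := fun n c =>
  if n = (c : Fin N) then 1 else 0

/-- The Khatri-Rao (column-wise Kronecker) product. -/
def khatriRao {m n L : Type*} (Z : Matrix m L ℝ) (X : Matrix n L ℝ) :
    Matrix (m × n) L ℝ := fun p ℓ => Z p.1 ℓ * X p.2 ℓ

/-- Column-stacking vectorization: entry `(t,i)` of `vec P` is `P i t`. -/
def vec {n t : Type*} (P : Matrix n t ℝ) : t × n → ℝ := fun p => P p.2 p.1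

theorem selection_mul_transpose {N L : ℕ} (S : Matrix (Fin N) (Fin L) ℝ)
    (hS01 : ∀ i j, S i j = 0 ∨ S i j = 1) (hSrow : ∀ i, ∃! j, S i j = 1)
    (hSdist : Function.Injective fun i => S i) : S * Sᵀ = 1 := by
  choose f hf hfu using hSrow
  have hS : ∀ i j, S i j = if j = f i then 1 else 0 := by
    intro i j
    split_ifs with h
    · rw [h]; exact hf i
    · exact (hS01 i j).resolve_right fun h1 => h (hfu i j h1)
  have hinj : Function.Injective f := by
    intro i k h
    apply hSdist
    funext j
    simp only [hS, h]
  ext i k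
  simp [Matrix.mul_apply, hS, Matrix.one_apply, hinj.eq_iff, eq_comm]

theorem isUnit_iff_rank_eq {N : ℕ} (A : Matrix (Fin N) (Fin N) ℝ) :
    IsUnit A ↔ A.rank = N := by
  constructor
  · intro h
    simpa using Matrix.rank_of_isUnit A h
  · intro h
    rw [← Matrix.mulVec_surjective_iff_isUnit]
    have htop : LinearMap.range A.mulVecLin = ⊤ := by
      apply Submodule.eq_top_of_finrank_eq
      simpa [Matrix.rank] using h
    exact LinearMap.range_eq_top.mp htop

/-- `C − diag(b)` is invertible iff `H = H̄Sᵀ` has full column rank. -/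
theorem C_minus_diag_invertible_iff
    {M L N : ℕ} (α : ℝ) (hα : 0 < α) (Hb : Matrix (Fin M) (Fin L) ℝ)
    (S : Matrix (Fin N) (Fin L) ℝ)
    (hS01 : ∀ i j, S i j = 0 ∨ S i j = 1)
    (hSrow : ∀ i, ∃! j, S i j = 1)
    (hSdist : Function.Injective fun i => S i)
    (b : Fin L → ℝ) (hb : Sᵀ * S = Matrix.diagonal b) :
    IsUnit ((α⁻¹ • (Hbᵀ * Hb) + 1)⁻¹ - Matrix.diagonal b) ↔
      (Hb * Sᵀ).rank = N := by
  have hSS := selection_mul_transpose S hS01 hSrow hSdist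
  have hK : IsUnit (α⁻¹ • (Hbᵀ * Hb) + 1) := by
    have h1 : (α⁻¹ • (Hbᵀ * Hb)).PosSemidef :=
      (Matrix.posSemidef_conjTranspose_mul_self Hb).smul (inv_nonneg.mpr hα.le)
    exact (Matrix.PosDef.posSemidef_add h1 Matrix.PosDef.one).isUnit
  set K := α⁻¹ • (Hbᵀ * Hb) + 1 with hKdef
  have hKdet : IsUnit K.det := (Matrix.isUnit_iff_isUnit_det _).mp hK
  have hmul : K * (K⁻¹ - Matrix.diagonal b) = 1 - (K * Sᵀ) * S := by
    rw [← hb, mul_sub, Matrix.mul_nonsing_inv _ hKdet, Matrix.mul_assoc]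
  have hsmall : 1 - S * (K * Sᵀ) = (-α⁻¹) • ((Hb * Sᵀ)ᵀ * (Hb * Sᵀ)) := by
    have : S * (K * Sᵀ) = α⁻¹ • ((Hb * Sᵀ)ᵀ * (Hb * Sᵀ)) + 1 := by
      rw [hKdef, Matrix.add_mul, Matrix.mul_add, Matrix.one_mul, hSS]
      simp [Matrix.mul_assoc]
    rw [this, neg_smul]
    abel
  have hdet : K.det * (K⁻¹ - Matrix.diagonal b).det =
      (-α⁻¹) ^ N * ((Hb * Sᵀ)ᵀ * (Hb * Sᵀ)).det := by
    rw [← Matrix.det_mul, hmul, Matrix.det_one_sub_mul_comm, hsmall, Matrix.det_smul,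
      Fintype.card_fin]
  have hpow : IsUnit ((-α⁻¹) ^ N) :=
    (isUnit_iff_ne_zero.mpr (neg_ne_zero.mpr (inv_ne_zero (ne_of_gt hα)))).pow N
  rw [← Matrix.rank_transpose_mul_self, ← isUnit_iff_rank_eq, Matrix.isUnit_iff_isUnit_det,
    Matrix.isUnit_iff_isUnit_det, ← hKdet.mul_left_iff, hdet, hpow.mul_left_iff]
end

section
/- Let C ⊆ {1,…,N} and T ≥ |C|. Let the true grid be a tree on buses {0,1,…,N} with reduced incidence matrix A₀ and positive conductance vector g₀, set G₀ := A₀ᵀ diag(g₀) A₀, and suppose all leaf buses of this tree lie in C. Let Δ ∈ ℝ^{|C|×T} satisfy rank(Δ) = |C|, and form the noiseless probing data V := G₀⁻¹ I_C Δ and P := I_C Δ. Then for any spanning tree on {0,1,…,N} with reduced incidence matrix A and positive conductance vector g whose leaf buses all lie in C: the least-squares fit is exact, i.e., Aᵀ diag(g) A V = P, if and only if Aᵀ diag(g) A = G₀. (In words: under noiseless probing data, a candidate radial topology with positive line conductances attains zero least-squares cost exactly when it reproduces the true matrix G₀.) -/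
/-!
The inverse of `G = Aᵀ diag(g) A` is the matrix `R` whose entry `R m n` is the total resistance
`∑ 1 / g ℓ` over the lines shared by the feeding paths of `m` and `n` (`Gmat_mul_R`): the signed
path indicators form the inverse of `A`. As `Δ` has a right inverse, an exact fit says that the
resistance matrices of the two grids agree in every column indexed by `C`.

Those columns determine `R` through the identity `R m n = max_{c ∈ C} min (R m c) (R n c)`:
* `≥` holds for every bus `c`, because within the feeding path of `c` the portions shared with `m`
  and with `n` are nested (`shared_nested`, `min_Rbus_le`);
* equality is attained at any leaf `c` fed through `n` (`exists_leaf_below`), and leaves lie in `C`.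
Each half used on one of the two grids gives the inequalities between the two resistance matrices
in both directions (`R_le_of_eq_on_probed`), hence their equality and that of their inverses.
-/

open Matrix BigOperators
open scoped Classical

namespace RadialGrid

variable {N : ℕ} (Γ : RadialGrid N)

/-! ### Feeding paths -/

lemma fpath_isPath (n : Fin (N + 1)) : (Γ.fpath n).IsPath :=
  (Γ.tree.existsUnique_path 0 n).choose_spec.1

lemma isAcyclic : Γ.graph.IsAcyclic := Γ.tree.isAcyclic

lemma not_onPath_zero (ℓ : Fin N) : ¬ Γ.onPath ℓ 0 := by
  have h := Γ.fpath_isPath 0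
  rw [SimpleGraph.Walk.isPath_iff_nil] at h
  simp [onPath, SimpleGraph.Walk.eq_nil_iff_nil.2 h]

/-- Bus `w` is fed from bus `v` through line `ℓ`: the two buses are the ends of `ℓ`, and the
feeding path of `w` is that of `v` extended by the new line `ℓ`. -/
def Feeds (v w : Fin (N + 1)) (ℓ : Fin N) : Prop :=
  s((Γ.ep ℓ).1, (Γ.ep ℓ).2) = s(v, w) ∧ ¬ Γ.onPath ℓ v ∧
    ∀ k, Γ.onPath k w ↔ Γ.onPath k v ∨ k = ℓ

lemma feeds_of_mem_support {v w : Fin (N + 1)} (h : Γ.graph.Adj v w)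
    (hv : v ∈ (Γ.fpath w).support) {ℓ : Fin N} (hℓ : s((Γ.ep ℓ).1, (Γ.ep ℓ).2) = s(v, w)) :
    Γ.Feeds v w ℓ := by
  have hc := Γ.isAcyclic.path_concat (Γ.fpath_isPath v) (Γ.fpath_isPath w) h hv
  have hp := Γ.fpath_isPath w
  rw [hc, SimpleGraph.Walk.concat_isPath_iff] at hp
  refine ⟨hℓ, ?_, fun k => ?_⟩
  · unfold onPath
    rw [hℓ]
    exact fun hmem => hp.2 (SimpleGraph.Walk.snd_mem_support_of_mem_edges _ hmem)
  · unfold onPath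
    rw [hc, SimpleGraph.Walk.edges_concat, ← hℓ]
    simp only [List.concat_eq_append, List.mem_append, List.mem_singleton]
    exact or_congr_right ⟨fun h => Γ.inj h, fun h => by rw [h]⟩

lemma adj_ep (ℓ : Fin N) : Γ.graph.Adj (Γ.ep ℓ).1 (Γ.ep ℓ).2 := by
  unfold graph
  rw [SimpleGraph.fromEdgeSet_adj]
  exact ⟨⟨ℓ, rfl⟩, Γ.ne ℓ⟩

lemma exists_line {v w : Fin (N + 1)} (h : Γ.graph.Adj v w) :
    ∃ ℓ, s((Γ.ep ℓ).1, (Γ.ep ℓ).2) = s(v, w) := by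
  unfold graph at h
  rw [SimpleGraph.fromEdgeSet_adj] at h
  exact h.1

lemma feeds_or_feeds {v w : Fin (N + 1)} (h : Γ.graph.Adj v w) {ℓ : Fin N}
    (hℓ : s((Γ.ep ℓ).1, (Γ.ep ℓ).2) = s(v, w)) : Γ.Feeds v w ℓ ∨ Γ.Feeds w v ℓ := by
  by_cases hw : w ∈ (Γ.fpath v).support
  · exact Or.inr (Γ.feeds_of_mem_support h.symm hw (hℓ.trans Sym2.eq_swap))
  · exact Or.inl (Γ.feeds_of_mem_support h
      (Γ.isAcyclic.mem_support_of_ne_mem_support_of_adj_of_isPath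
        (Γ.fpath_isPath w) (Γ.fpath_isPath v) h.symm hw) hℓ)

lemma exists_feeds {n : Fin (N + 1)} (hn : n ≠ 0) : ∃ v ℓ, Γ.Feeds v n ℓ := by
  have hnil : ¬ (Γ.fpath n).Nil := SimpleGraph.Walk.not_nil_of_ne hn.symm
  have hadj := SimpleGraph.Walk.adj_penultimate hnil
  obtain ⟨ℓ, hℓ⟩ := Γ.exists_line hadj
  exact ⟨_, ℓ, Γ.feeds_of_mem_support hadj (SimpleGraph.Walk.getVert_mem_support _ _) hℓ⟩

/-- The number of lines on the feeding path of a bus. -/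
noncomputable def depth (n : Fin (N + 1)) : ℕ := (Finset.univ.filter fun k => Γ.onPath k n).card

variable {Γ}

lemma Feeds.adj {v w : Fin (N + 1)} {ℓ : Fin N} (h : Γ.Feeds v w ℓ) : Γ.graph.Adj v w := by
  have := Γ.adj_ep ℓ
  rw [← SimpleGraph.mem_edgeSet] at this ⊢
  rwa [← h.1]

lemma Feeds.depth_lt {v w : Fin (N + 1)} {ℓ : Fin N} (h : Γ.Feeds v w ℓ) :
    Γ.depth v < Γ.depth w := by
  refine Finset.card_lt_card ((Finset.ssubset_iff_of_subset fun k hk => ?_).2 ⟨ℓ, ?_, ?_⟩)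
  · have := (h.2.2 k).2
    simp_all
  · simp [h.2.2]
  · simp [h.2.1]

variable (Γ)

/-- Induction along the tree, from the substation outwards. -/
lemma feeds_induction {P : Fin (N + 1) → Prop} (h0 : P 0)
    (hs : ∀ v w ℓ, Γ.Feeds v w ℓ → P v → P w) (n : Fin (N + 1)) : P n := by
  induction hd : Γ.depth n using Nat.strong_induction_on generalizing n with
  | _ d ih =>
    by_cases hn : n = 0
    · exact hn ▸ h0
    · obtain ⟨v, ℓ, hf⟩ := Γ.exists_feeds hn
      exact hs v n ℓ hf (ih _ (hd ▸ hf.depth_lt) v rfl)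

variable {Γ}

/-- A feeding path that contains the last line `ℓ` of the feeding path of `w` contains that whole
path. -/
lemma Feeds.onPath_mono {v w : Fin (N + 1)} {ℓ : Fin N} (h : Γ.Feeds v w ℓ) (m : Fin (N + 1)) :
    Γ.onPath ℓ m → ∀ k, Γ.onPath k w → Γ.onPath k m := by
  induction m using Γ.feeds_induction with
  | h0 => exact fun hℓ => absurd hℓ (Γ.not_onPath_zero ℓ)
  | hs v' w' ℓ' h' ih =>
    intro hℓ k hk
    rcases (h'.2.2 ℓ).1 hℓ with hv | rfl
    · exact (h'.2.2 k).2 (Or.inl (ih hv k hk))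
    · rcases Sym2.eq_iff.1 (h.1.symm.trans h'.1) with ⟨-, rfl⟩ | ⟨rfl, rfl⟩
      · exact hk
      · -- The reversed orientation would put `ℓ` on the feeding path of `v'`, its upper end.
        exact absurd ((h.2.2 ℓ).2 (Or.inr rfl)) h'.2.1

variable (Γ)

/-- Within the feeding path of `c`, the portions shared with two other buses are nested. -/
lemma shared_nested (m n c : Fin (N + 1)) :
    (∀ k, Γ.onPath k c → Γ.onPath k m → Γ.onPath k n) ∨
      (∀ k, Γ.onPath k c → Γ.onPath k n → Γ.onPath k m) := by
  induction c using Γ.feeds_induction with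
  | h0 => exact Or.inl fun k hk => absurd hk (Γ.not_onPath_zero k)
  | hs v w ℓ h ih =>
    by_cases hm : Γ.onPath ℓ m
    · exact Or.inr fun k hk _ => h.onPath_mono m hm k hk
    by_cases hn : Γ.onPath ℓ n
    · exact Or.inl fun k hk _ => h.onPath_mono n hn k hk
    refine ih.imp (fun H k hk hkm => ?_) (fun H k hk hkn => ?_)
    · rcases (h.2.2 k).1 hk with hv | rfl
      exacts [H k hv hkm, absurd hkm hm]
    · rcases (h.2.2 k).1 hk with hv | rfl
      exacts [H k hv hkn, absurd hkn hn]

/-- Every bus other than the substation feeds some leaf: a deepest bus fed through it is one. -/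
lemma exists_leaf_below {n : Fin (N + 1)} (hn : n ≠ 0) :
    ∃ c, Γ.isLeaf c ∧ ∀ k, Γ.onPath k n → Γ.onPath k c := by
  obtain ⟨c, hc, hmax⟩ := Finset.exists_max_image
    (Finset.univ.filter fun c => ∀ k, Γ.onPath k n → Γ.onPath k c) Γ.depth ⟨n, by simp⟩
  simp only [Finset.mem_filter, Finset.mem_univ, true_and] at hc hmax
  have hc0 : c ≠ 0 := by
    rintro rfl
    obtain ⟨v, ℓ, h⟩ := Γ.exists_feeds hn
    exact Γ.not_onPath_zero ℓ (hc ℓ ((h.2.2 ℓ).2 (Or.inr rfl)))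
  refine ⟨c, ⟨hc0, ?_⟩, hc⟩
  obtain ⟨v, ℓ, h⟩ := Γ.exists_feeds hc0
  refine Set.ncard_eq_one.2 ⟨v, Set.ext fun w => ?_⟩
  rw [SimpleGraph.mem_neighborSet, Set.mem_singleton_iff]
  refine ⟨fun hw => ?_, fun hw => hw ▸ h.adj.symm⟩
  obtain ⟨ℓ', hℓ'⟩ := Γ.exists_line hw
  rcases Γ.feeds_or_feeds hw hℓ' with h' | h'
  · exact absurd (hmax w fun k hk => (h'.2.2 k).2 (Or.inl (hc k hk))) (not_le.2 h'.depth_lt)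
  · by_cases he : ℓ = ℓ'
    · subst he
      exact Sym2.congr_left.1 (h'.1.symm.trans h.1)
    · -- If `ℓ` were above `w`, so would be all of the feeding path of `c`, including `ℓ'`.
      have hlw : Γ.onPath ℓ w :=
        ((h'.2.2 ℓ).1 ((h.2.2 ℓ).2 (Or.inr rfl))).resolve_right he
      exact (h'.2.1 (h.onPath_mono w hlw ℓ' ((h'.2.2 ℓ').2 (Or.inr rfl)))).elim

/-! ### The resistance matrix -/

lemma Rbus_le {r : Fin N → ℝ} (hr : ∀ ℓ, 0 ≤ r ℓ) {a b a' b' : Fin (N + 1)}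
    (h : ∀ k, Γ.onPath k a → Γ.onPath k b → Γ.onPath k a' ∧ Γ.onPath k b') :
    Γ.Rbus r a b ≤ Γ.Rbus r a' b' := by
  refine Finset.sum_le_sum fun k _ => ?_
  split_ifs with h1 h2
  · exact le_rfl
  · exact absurd (h k h1.1 h1.2) h2
  · exact hr k
  · exact le_rfl

/-- The ultrametric inequality for shared resistances. -/
lemma min_Rbus_le {r : Fin N → ℝ} (hr : ∀ ℓ, 0 ≤ r ℓ) (m n c : Fin (N + 1)) :
    min (Γ.Rbus r m c) (Γ.Rbus r n c) ≤ Γ.Rbus r m n := by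
  rcases Γ.shared_nested m n c with h | h
  · exact (min_le_left _ _).trans (Γ.Rbus_le hr fun k hm hc => ⟨hm, h k hc hm⟩)
  · exact (min_le_right _ _).trans (Γ.Rbus_le hr fun k hn hc => ⟨h k hc hn, hn⟩)

/-- If two grids have the same resistances towards the probed buses, and the leaves of the first
one are probed, then the resistances of the first are at most those of the second. -/
lemma R_le_of_eq_on_probed {Γ Γ' : RadialGrid N} {r r' : Fin N → ℝ} (hr : ∀ ℓ, 0 ≤ r ℓ)
    (hr' : ∀ ℓ, 0 ≤ r' ℓ) {C : Finset (Fin N)} (hleaf : ∀ n : Fin N, Γ.isLeaf n.succ → n ∈ C)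
    (h : ∀ m, ∀ c ∈ C, Γ.R r m c = Γ'.R r' m c) (m n : Fin N) : Γ.R r m n ≤ Γ'.R r' m n := by
  obtain ⟨c, hc, hsub⟩ := Γ.exists_leaf_below (Fin.succ_ne_zero n)
  obtain ⟨c, rfl⟩ := Fin.exists_succ_eq.2 hc.1
  have hcC := hleaf c hc
  have h1 : Γ.R r m n ≤ Γ.R r m c := Γ.Rbus_le hr fun k hm hn => ⟨hm, hsub k hn⟩
  have h2 : Γ.R r m n ≤ Γ.R r n c := Γ.Rbus_le hr fun k _ hn => ⟨hn, hsub k hn⟩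
  rw [h m c hcC] at h1
  rw [h n c hcC] at h2
  exact (le_min h1 h2).trans (Γ'.min_Rbus_le hr' m.succ n.succ c.succ)

/-! ### Inverting the incidence and conductance matrices -/

/-- A row of the reduced incidence matrix takes the potential difference across its line, for
potentials that vanish at the substation. -/
lemma sum_A_mul (ℓ : Fin N) {f : Fin (N + 1) → ℝ} (hf : f 0 = 0) :
    ∑ i, Γ.A ℓ i * f i.succ = f (Γ.ep ℓ).1 - f (Γ.ep ℓ).2 := by
  have hA : ∀ i, Γ.A ℓ i * f i.succ =
      (if i.succ = (Γ.ep ℓ).1 then f i.succ else 0) -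
        (if i.succ = (Γ.ep ℓ).2 then f i.succ else 0) := by
    intro i
    have := Γ.ne ℓ
    unfold A
    split_ifs with h1 h2 <;> simp_all
  have hsum : ∀ a : Fin (N + 1), ∑ i : Fin N, (if i.succ = a then f i.succ else 0) = f a := by
    intro a
    have := Fin.sum_univ_succ fun j : Fin (N + 1) => if j = a then f j else 0
    rw [Finset.sum_ite_eq' Finset.univ a f] at this
    simp only [Finset.mem_univ, if_true, hf, ite_self, zero_add] at this
    exact this.symm
  rw [Finset.sum_congr rfl fun i _ => hA i, Finset.sum_sub_distrib, hsum, hsum]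

/-- The indicator of line `k` lying on the feeding path of bus `n`. -/
noncomputable def ind (k : Fin N) (n : Fin (N + 1)) : ℝ := if Γ.onPath k n then 1 else 0

/-- The orientation of a line: `1` if its first end is the one farther from the substation, and
`-1` otherwise. -/
noncomputable def sgn (k : Fin N) : ℝ := Γ.ind k (Γ.ep k).1 - Γ.ind k (Γ.ep k).2

lemma sgn_mul_self (k : Fin N) : Γ.sgn k * Γ.sgn k = 1 := by
  rcases Γ.feeds_or_feeds (Γ.adj_ep k) rfl with h | h <;>
    simp [sgn, ind, h.2.1, h.2.2]

lemma ind_sub_ind_of_ne {k ℓ : Fin N} (hne : k ≠ ℓ) :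
    Γ.ind k (Γ.ep ℓ).1 - Γ.ind k (Γ.ep ℓ).2 = 0 := by
  rcases Γ.feeds_or_feeds (Γ.adj_ep ℓ) rfl with h | h <;>
    simp [ind, h.2.2 k, hne]

/-- The signed path matrix, inverse to the reduced incidence matrix. -/
noncomputable def U : Matrix (Fin N) (Fin N) ℝ := fun n k => Γ.sgn k * Γ.ind k n.succ

lemma A_mul_U : Γ.A * Γ.U = 1 := by
  ext ℓ k
  have := Γ.sum_A_mul ℓ (f := fun n => Γ.sgn k * Γ.ind k n) (by simp [ind, not_onPath_zero])
  rw [Matrix.mul_apply]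
  refine this.trans ?_
  rw [← mul_sub]
  by_cases h : k = ℓ
  · subst h
    rw [Matrix.one_apply_eq]
    exact Γ.sgn_mul_self k
  · rw [Γ.ind_sub_ind_of_ne h, mul_zero, Matrix.one_apply_ne (Ne.symm h)]

lemma R_eq (r : Fin N → ℝ) : (Matrix.of (Γ.R r)) = Γ.U * Matrix.diagonal r * Γ.Uᵀ := by
  ext m n
  simp only [Matrix.of_apply, R, Rbus, Matrix.mul_apply (M := Γ.U * Matrix.diagonal r),
    Matrix.mul_diagonal, Matrix.transpose_apply, U]
  refine Finset.sum_congr rfl fun k _ => ?_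
  have : Γ.sgn k * Γ.ind k m.succ * r k * (Γ.sgn k * Γ.ind k n.succ) =
      (Γ.sgn k * Γ.sgn k) * (Γ.ind k m.succ * Γ.ind k n.succ * r k) := by ring
  rw [this, sgn_mul_self]
  by_cases h1 : Γ.onPath k m.succ <;> by_cases h2 : Γ.onPath k n.succ <;> simp [ind, h1, h2]

/-- The resistance matrix is the inverse of the conductance matrix. -/
lemma Gmat_mul_R {g : Fin N → ℝ} (hg : ∀ ℓ, 0 < g ℓ) :
    Γ.Gmat g * Matrix.of (Γ.R fun ℓ => (g ℓ)⁻¹) = 1 := by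
  have hD : Matrix.diagonal g * Matrix.diagonal (fun ℓ => (g ℓ)⁻¹) = 1 := by
    rw [Matrix.diagonal_mul_diagonal, ← Matrix.diagonal_one]
    exact congrArg _ (funext fun ℓ => mul_inv_cancel₀ (hg ℓ).ne')
  have hUA : Γ.U * Γ.A = 1 := mul_eq_one_comm.1 Γ.A_mul_U
  calc Γ.Gmat g * Matrix.of (Γ.R fun ℓ => (g ℓ)⁻¹)
      = Γ.Aᵀ * (Matrix.diagonal g * (Γ.A * Γ.U) * Matrix.diagonal (fun ℓ => (g ℓ)⁻¹)) * Γ.Uᵀ := by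
        rw [R_eq, Gmat]
        simp only [Matrix.mul_assoc]
    _ = (Γ.U * Γ.A)ᵀ := by rw [A_mul_U, Matrix.mul_one, hD, Matrix.mul_one, Matrix.transpose_mul]
    _ = 1 := by rw [hUA, Matrix.transpose_one]

end RadialGrid

lemma exists_right_inverse_of_rank {ι κ : Type*} [Fintype ι] [Fintype κ] (M : Matrix ι κ ℝ)
    (h : M.rank = Fintype.card ι) : ∃ M' : Matrix κ ι ℝ, M * M' = 1 := by
  rw [← Matrix.mulVec_surjective_iff_exists_right_inverse]
  have : LinearMap.range M.mulVecLin = ⊤ :=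
    Submodule.eq_top_of_finrank_eq (by rw [Module.finrank_fintype_fun_eq_card]; exact h)
  exact LinearMap.range_eq_top.1 this

/-- Under noiseless probing data `V = G₀⁻¹ I_C Δ`, `P = I_C Δ`, a
candidate radial topology with positive conductances (leaves all probed) attains an
exact least-squares fit `G V = P` iff `G = G₀`. -/
theorem zero_ls_cost_iff_true_topology
    {N T : ℕ} (hN : 1 ≤ N) (C : Finset (Fin N)) (hT : C.card ≤ T)
    (Γ₀ : RadialGrid N) (g₀ : Fin N → ℝ) (hg₀ : ∀ ℓ, 0 < g₀ ℓ)
    (hleaf₀ : ∀ n : Fin N, Γ₀.isLeaf n.succ → n ∈ C)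
    (Δ : Matrix ↥C (Fin T) ℝ) (hΔ : Δ.rank = C.card)
    (Γ : RadialGrid N) (g : Fin N → ℝ) (hg : ∀ ℓ, 0 < g ℓ)
    (hleaf : ∀ n : Fin N, Γ.isLeaf n.succ → n ∈ C) :
    Γ.Gmat g * ((Γ₀.Gmat g₀)⁻¹ * IC C * Δ) = IC C * Δ ↔ Γ.Gmat g = Γ₀.Gmat g₀ := by
  have hinv₀ := Γ₀.Gmat_mul_R hg₀
  have hinv := Γ.Gmat_mul_R hg
  set R₀ := Matrix.of (Γ₀.R fun ℓ => (g₀ ℓ)⁻¹) with hR₀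
  set R := Matrix.of (Γ.R fun ℓ => (g ℓ)⁻¹) with hR
  rw [Matrix.inv_eq_right_inv hinv₀]
  constructor
  · intro h
    obtain ⟨Δ', hΔ'⟩ := exists_right_inverse_of_rank Δ (by rw [hΔ, Fintype.card_coe])
    have hfit : Γ.Gmat g * (R₀ * IC C) = IC C := by
      have := congrArg (· * Δ') h
      simpa only [Matrix.mul_assoc, hΔ', Matrix.mul_one] using this
    have hcols : R₀ * IC C = R * IC C := by
      have := congrArg (R * ·) hfit
      simpa only [← Matrix.mul_assoc, mul_eq_one_comm.1 hinv, Matrix.one_mul] using this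
    have hIC : ∀ (M : Matrix (Fin N) (Fin N) ℝ) m (c : C), (M * IC C) m c = M m c := by
      intro M m c
      simp [Matrix.mul_apply, IC]
    have hentry : ∀ m, ∀ c ∈ C,
        Γ₀.R (fun ℓ => (g₀ ℓ)⁻¹) m c = Γ.R (fun ℓ => (g ℓ)⁻¹) m c := by
      intro m c hc
      have := congrFun (congrFun hcols m) ⟨c, hc⟩
      rwa [hIC, hIC] at this
    have hr₀ : ∀ ℓ, 0 ≤ (g₀ ℓ)⁻¹ := fun ℓ => (inv_pos.2 (hg₀ ℓ)).le
    have hr : ∀ ℓ, 0 ≤ (g ℓ)⁻¹ := fun ℓ => (inv_pos.2 (hg ℓ)).le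
    have hRR : R₀ = R := Matrix.ext fun m n => le_antisymm
      (RadialGrid.R_le_of_eq_on_probed hr₀ hr hleaf₀ hentry m n)
      (RadialGrid.R_le_of_eq_on_probed hr hr₀ hleaf (fun m c hc => (hentry m c hc).symm) m n)
    rw [← Matrix.inv_eq_left_inv hinv, ← Matrix.inv_eq_left_inv hinv₀, hRR]
  · intro h
    rw [h, Matrix.mul_assoc, ← Matrix.mul_assoc, hinv₀, Matrix.one_mul]
end
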